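/- Let h : [0,T]×D → ℝ be bounded measurable, let p ≥ 1 and N ∈ ℕ. If (v_n) is a sequence in H_N converging weakly in L²([0,T]×D) to v, then for every t ∈ [0,T], the L^p(D)-norm of the function x ↦ ∫_0^t ∫_D G_{t−s}(x,y) h(s,y) (v_n(s,y) − v(s,y)) dy ds converges to 0 as n → ∞. -/

import Mathlib

open MeasureTheory Real Filter

noncomputable section

/-- The spatial domain `[0, π]^d`. -/
def Dom (d : ℕ) : Set (Fin d → ℝ) := Set.Icc 0 (fun _ => Real.pi)

/-- Normalizing constants of the Neumann cosine basis. -/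
def eps0 (j : ℕ) : ℝ := if j = 0 then Real.sqrt (1 / Real.pi) else Real.sqrt (2 / Real.pi)

/-- Neumann eigenfunctions of `-Δ` on `[0, π]^d`. -/
def phi {d : ℕ} (k : Fin d → ℕ) (x : Fin d → ℝ) : ℝ :=
  ∏ i, eps0 (k i) * Real.cos ((k i : ℝ) * x i)

/-- `|k|² = Σ kᵢ²`. -/
def ksq {d : ℕ} (k : Fin d → ℕ) : ℝ := ∑ i, (k i : ℝ) ^ 2

/-- Green function of `∂ₜ + Δ²` with Neumann boundary conditions on `[0, π]^d`. -/
def green {d : ℕ} (t : ℝ) (x y : Fin d → ℝ) : ℝ :=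
  ∑' k : Fin d → ℕ, Real.exp (-(ksq k ^ 2) * t) * phi k x * phi k y

/-- Laplacian in the `x`-variable of the Green function. -/
def greenLap {d : ℕ} (t : ℝ) (x y : Fin d → ℝ) : ℝ :=
  -∑' k : Fin d → ℕ, ksq k * Real.exp (-(ksq k ^ 2) * t) * phi k x * phi k y

/-- The `L^p([0,π]^d)`-norm (real exponent `p`). -/
def LpNorm {d : ℕ} (p : ℝ) (u : (Fin d → ℝ) → ℝ) : ℝ :=
  (∫ x in Dom d, |u x| ^ p) ^ (1 / p)

/-- `v ∈ L²([0,T] × D)`. -/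
def MemL2TD {d : ℕ} (T : ℝ) (v : ℝ → (Fin d → ℝ) → ℝ) : Prop :=
  Measurable (Function.uncurry v) ∧
  MeasureTheory.IntegrableOn (fun q : ℝ × (Fin d → ℝ) => (v q.1 q.2) ^ 2)
    (Set.Icc 0 T ×ˢ Dom d)

/-- `v ∈ H_N = {v ∈ L²([0,T]×D) : ∫_0^T ∫_D v² ≤ N}`. -/
def MemHN {d : ℕ} (T : ℝ) (N : ℕ) (v : ℝ → (Fin d → ℝ) → ℝ) : Prop :=
  MemL2TD T v ∧ (∫ t in Set.Icc (0 : ℝ) T, ∫ x in Dom d, (v t x) ^ 2) ≤ (N : ℝ)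

/-- `Z` solves the skeleton equation (2.10) with coefficients `b = f′(u⁰)`, `g = σ(u⁰)` and
control `v`, with `sup_{t ∈ [0,T]} ‖Z(t,·)‖_p < ∞`. -/
def SolvesSkeleton {d : ℕ} (T p : ℝ) (b g v Z : ℝ → (Fin d → ℝ) → ℝ) : Prop :=
  Measurable (Function.uncurry Z) ∧
  (∃ M : ℝ, ∀ t ∈ Set.Icc (0 : ℝ) T, LpNorm p (Z t) ≤ M) ∧
  ∀ t ∈ Set.Icc (0 : ℝ) T, ∀ x ∈ Dom d,
    Z t x = (∫ s in (0 : ℝ)..t, ∫ y in Dom d, green (t - s) x y * g s y * v s y) +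
      ∫ s in (0 : ℝ)..t, ∫ y in Dom d, greenLap (t - s) x y * b s y * Z s y

theorem ksq_nonneg {d : ℕ} (k : Fin d → ℕ) : 0 ≤ ksq k :=
  Finset.sum_nonneg fun _ _ => sq_nonneg _

theorem summable_inv_one_add_sq_rpow :
    Summable fun n : ℕ => ((1 + (n : ℝ) ^ 2) ^ (2 / 3 : ℝ))⁻¹ := by
  rw [← summable_nat_add_iff 1]
  have hs : Summable fun n : ℕ => 1 / ((n + 1 : ℕ) : ℝ) ^ (4 / 3 : ℝ) :=
    (summable_nat_add_iff 1).2 (Real.summable_one_div_nat_rpow.2 (by norm_num))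
  refine hs.of_nonneg_of_le (fun n => by positivity) fun n => ?_
  rw [one_div]
  have hle : ((n + 1 : ℕ) : ℝ) ^ (4 / 3 : ℝ) ≤ (1 + ((n + 1 : ℕ) : ℝ) ^ 2) ^ (2 / 3 : ℝ) := by
    have heq : ((n + 1 : ℕ) : ℝ) ^ (4 / 3 : ℝ) = (((n + 1 : ℕ) : ℝ) ^ 2) ^ (2 / 3 : ℝ) := by
      rw [← Real.rpow_natCast, ← Real.rpow_mul (by positivity)]
      norm_num
    rw [heq]
    exact Real.rpow_le_rpow (by positivity) (by linarith) (by norm_num)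
  exact inv_anti₀ (by positivity) hle

/-- A tensor power of a nonnegative summable sequence is summable. -/
theorem summable_prod_apply {d : ℕ} {f : ℕ → ℝ} (hf : Summable f) (hf0 : ∀ n, 0 ≤ f n) :
    Summable fun k : Fin d → ℕ => ∏ i, f (k i) := by
  classical
  refine summable_of_sum_le (c := ∏ _i : Fin d, ∑' n, f n)
    (fun k => Finset.prod_nonneg fun i _ => hf0 _) fun u => ?_
  obtain ⟨A, hA⟩ : ∃ A : Fin d → Finset ℕ, ∀ k ∈ u, ∀ i, k i ∈ A i :=
    ⟨fun i => u.image fun k => k i, fun k hk i => Finset.mem_image_of_mem (fun k => k i) hk⟩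
  calc ∑ k ∈ u, ∏ i, f (k i) ≤ ∑ k ∈ Fintype.piFinset A, ∏ i, f (k i) :=
        Finset.sum_le_sum_of_subset_of_nonneg (fun k hk => Fintype.mem_piFinset.2 (hA k hk))
          fun k _ _ => Finset.prod_nonneg fun i _ => hf0 _
    _ = ∏ i, ∑ n ∈ A i, f n := by rw [Finset.prod_univ_sum]
    _ ≤ ∏ _i : Fin d, ∑' n, f n :=
        Finset.prod_le_prod (fun i _ => Finset.sum_nonneg fun n _ => hf0 n)
          fun i _ => hf.sum_le_tsum _ fun n _ => hf0 n

/-- The dimension restriction `d ≤ 3` enters through this summability. -/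
theorem summable_inv_one_add_ksq_sq {d : ℕ} (hd : d ≤ 3) :
    Summable fun k : Fin d → ℕ => ((1 + ksq k) ^ 2)⁻¹ := by
  refine (summable_prod_apply summable_inv_one_add_sq_rpow
    fun n => by positivity).of_nonneg_of_le (fun k => by positivity) fun k => ?_
  have hk := ksq_nonneg k
  rw [Finset.prod_inv_distrib]
  refine inv_anti₀ (Finset.prod_pos fun i _ => by positivity) ?_
  rw [Real.finsetProd_rpow _ _ fun i _ => by positivity]
  have hprod : ∏ i, (1 + (k i : ℝ) ^ 2) ≤ (1 + ksq k) ^ 3 := by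
    calc ∏ i, (1 + (k i : ℝ) ^ 2) ≤ ∏ _i : Fin d, (1 + ksq k) := by
          refine Finset.prod_le_prod (fun i _ => by positivity) fun i _ => ?_
          have := Finset.single_le_sum (f := fun i => (k i : ℝ) ^ 2)
            (fun i _ => sq_nonneg _) (Finset.mem_univ i)
          simpa [ksq] using this
      _ = (1 + ksq k) ^ d := by simp
      _ ≤ (1 + ksq k) ^ 3 := pow_le_pow_right₀ (by linarith) hd
  calc (∏ i, (1 + (k i : ℝ) ^ 2)) ^ (2 / 3 : ℝ) ≤ ((1 + ksq k) ^ 3) ^ (2 / 3 : ℝ) :=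
        Real.rpow_le_rpow (Finset.prod_nonneg fun i _ => by positivity) hprod (by norm_num)
    _ = (1 + ksq k) ^ 2 := by
        rw [← Real.rpow_natCast, ← Real.rpow_mul (by linarith), ← Real.rpow_natCast]
        norm_num

theorem abs_phi_le_one {d : ℕ} (k : Fin d → ℕ) (x : Fin d → ℝ) : |phi k x| ≤ 1 := by
  have heps : ∀ j, |eps0 j| ≤ 1 := fun j => by
    have hpi := Real.two_le_pi
    unfold eps0
    split_ifs
    · rw [abs_of_nonneg (Real.sqrt_nonneg _)]
      exact Real.sqrt_le_one.2 ((div_le_one (by positivity)).2 (by linarith))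
    · rw [abs_of_nonneg (Real.sqrt_nonneg _)]
      exact Real.sqrt_le_one.2 ((div_le_one (by positivity)).2 (by linarith))
  rw [phi, Finset.abs_prod]
  refine Finset.prod_le_one (fun i _ => abs_nonneg _) fun i _ => ?_
  rw [abs_mul]
  exact mul_le_one₀ (heps _) (abs_nonneg _) (Real.abs_cos_le_one _)

theorem continuous_phi {d : ℕ} (k : Fin d → ℕ) : Continuous (phi k) := by
  unfold phi
  fun_prop

theorem integral_cos_intCast_mul {m : ℤ} (hm : m ≠ 0) :
    ∫ x in (0 : ℝ)..π, Real.cos (m * x) = 0 := by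
  have hm' : (m : ℝ) ≠ 0 := Int.cast_ne_zero.2 hm
  rw [intervalIntegral.integral_comp_mul_left (fun x => Real.cos x) hm', integral_cos]
  simp [Real.sin_int_mul_pi]

theorem integral_cos_mul_cos {j k : ℕ} (hjk : j ≠ k) :
    ∫ x in Set.Icc (0 : ℝ) π, Real.cos (j * x) * Real.cos (k * x) = 0 := by
  rw [integral_Icc_eq_integral_Ioc, ← intervalIntegral.integral_of_le Real.pi_pos.le]
  have hsum : ∀ x : ℝ, Real.cos (j * x) * Real.cos (k * x) =
      (Real.cos (((j - k : ℤ) : ℝ) * x) + Real.cos (((j + k : ℤ) : ℝ) * x)) / 2 := fun x => by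
    push_cast
    rw [sub_mul, add_mul, Real.cos_sub, Real.cos_add]
    ring
  simp_rw [hsum]
  rw [intervalIntegral.integral_div, intervalIntegral.integral_add
    (Continuous.intervalIntegrable (by fun_prop) _ _)
    (Continuous.intervalIntegrable (by fun_prop) _ _),
    integral_cos_intCast_mul (by omega), integral_cos_intCast_mul (by omega)]
  simp

theorem volume_restrict_Dom (d : ℕ) :
    (volume : Measure (Fin d → ℝ)).restrict (Dom d) =
      Measure.pi fun _ => volume.restrict (Set.Icc (0 : ℝ) π) := by
  rw [Dom, ← Set.pi_univ_Icc, volume_pi, Measure.restrict_pi_pi]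
  rfl

instance isFiniteMeasure_restrict_Dom (d : ℕ) :
    IsFiniteMeasure ((volume : Measure (Fin d → ℝ)).restrict (Dom d)) := by
  rw [volume_restrict_Dom]
  infer_instance

theorem integral_phi_mul_phi {d : ℕ} {k l : Fin d → ℕ} (hkl : k ≠ l) :
    ∫ y in Dom d, phi k y * phi l y = 0 := by
  obtain ⟨i, hi⟩ := Function.ne_iff.1 hkl
  rw [volume_restrict_Dom]
  simp_rw [phi, ← Finset.prod_mul_distrib]
  rw [integral_fintype_prod_eq_prod
    (fun i z => eps0 (k i) * Real.cos (k i * z) * (eps0 (l i) * Real.cos (l i * z)))]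
  refine Finset.prod_eq_zero (Finset.mem_univ i) ?_
  have hfac : ∀ z : ℝ, eps0 (k i) * Real.cos (k i * z) * (eps0 (l i) * Real.cos (l i * z)) =
      eps0 (k i) * eps0 (l i) * (Real.cos (k i * z) * Real.cos (l i * z)) := fun z => by ring
  simp_rw [hfac]
  rw [integral_const_mul, integral_cos_mul_cos hi, mul_zero]

theorem integral_phi_sq_le {d : ℕ} (k : Fin d → ℕ) :
    ∫ y in Dom d, phi k y * phi k y ≤ volume.real (Dom d) := by
  have hle : ∀ y, ‖phi k y * phi k y‖ ≤ 1 := fun y => by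
    rw [norm_mul]
    exact mul_le_one₀ (abs_phi_le_one k y) (norm_nonneg _) (abs_phi_le_one k y)
  have := norm_integral_le_of_norm_le_const (μ := volume.restrict (Dom d))
    (Eventually.of_forall hle)
  simpa using (le_abs_self _).trans this

/-- The time factor `exp (-|k|⁴ (t - s))` of the `k`-th mode, cut off to `s < t`. -/
def modeDecay {d : ℕ} (t : ℝ) (k : Fin d → ℕ) (s : ℝ) : ℝ :=
  if s < t then Real.exp (-(ksq k ^ 2) * (t - s)) else 0

/-- The kernel `G_{t-s}(x,y)`, cut off to `s < t`. -/
def causalGreen {d : ℕ} (t : ℝ) (x : Fin d → ℝ) (s : ℝ) (y : Fin d → ℝ) : ℝ :=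
  if s < t then green (t - s) x y else 0

theorem measurable_modeDecay {d : ℕ} (t : ℝ) (k : Fin d → ℕ) : Measurable (modeDecay t k) :=
  Measurable.ite measurableSet_Iio (by fun_prop) measurable_const

theorem abs_modeDecay_le_one {d : ℕ} (t : ℝ) (k : Fin d → ℕ) (s : ℝ) : |modeDecay t k s| ≤ 1 := by
  unfold modeDecay
  split_ifs with hs
  · rw [Real.abs_exp, Real.exp_le_one_iff]
    nlinarith [sq_nonneg (ksq k)]
  · simp

theorem exp_neg_mul_le {q τ : ℝ} (hq : 0 ≤ q) (hτ : 0 < τ) :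
    Real.exp (-(q ^ 2) * τ) ≤ 2 * (1 + 1 / τ) * ((1 + q) ^ 2)⁻¹ := by
  rw [← div_eq_mul_inv, le_div_iff₀ (by positivity)]
  set E := Real.exp (-(q ^ 2) * τ) with hE
  have hE1 : E ≤ 1 := Real.exp_le_one_iff.2 (by nlinarith [sq_nonneg q])
  have hE0 : 0 < E := Real.exp_pos _
  have hqE : E * q ^ 2 ≤ 1 / τ := by
    rw [le_div_iff₀ hτ]
    have hinv : E * Real.exp (q ^ 2 * τ) = 1 := by
      rw [hE, ← Real.exp_add]
      simp
    nlinarith [Real.add_one_le_exp (q ^ 2 * τ)]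
  nlinarith [mul_nonneg hE0.le (sq_nonneg (1 - q))]

theorem summable_mode {d : ℕ} (hd : d ≤ 3) (t s : ℝ) (x y : Fin d → ℝ) :
    Summable fun k : Fin d → ℕ => modeDecay t k s * phi k x * phi k y := by
  by_cases hs : s < t
  · refine Summable.of_norm_bounded
      ((summable_inv_one_add_ksq_sq hd).mul_left (2 * (1 + 1 / (t - s)))) fun k => ?_
    refine le_trans ?_ (exp_neg_mul_le (ksq_nonneg k) (sub_pos.2 hs))
    rw [modeDecay, if_pos hs, norm_mul, norm_mul, mul_assoc,
      Real.norm_of_nonneg (Real.exp_pos _).le]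
    exact mul_le_of_le_one_right (Real.exp_pos _).le
      (mul_le_one₀ (abs_phi_le_one k x) (norm_nonneg _) (abs_phi_le_one k y))
  · simp [modeDecay, hs]

theorem hasSum_causalGreen {d : ℕ} (hd : d ≤ 3) (t s : ℝ) (x y : Fin d → ℝ) :
    HasSum (fun k : Fin d → ℕ => modeDecay t k s * phi k x * phi k y)
      (causalGreen t x s y) := by
  convert (summable_mode hd t s x y).hasSum using 1
  unfold causalGreen modeDecay green
  split_ifs <;> simp

theorem measurable_causalGreen {d : ℕ} (hd : d ≤ 3) (t : ℝ) :
    Measurable fun z : (Fin d → ℝ) × ℝ × (Fin d → ℝ) => causalGreen t z.1 z.2.1 z.2.2 := by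
  refine measurable_of_tendsto_metrizable' (atTop : Filter (Finset (Fin d → ℕ)))
    (f := fun F z => ∑ k ∈ F, modeDecay t k z.2.1 * phi k z.1 * phi k z.2.2) (fun F => ?_)
    (tendsto_pi_nhds.2 fun z => ?_)
  swap
  · exact hasSum_causalGreen hd t z.2.1 z.1 z.2.2
  refine Finset.measurable_fun_sum _ fun k _ => ?_
  exact (((measurable_modeDecay t k).comp measurable_snd.fst).mul
    ((continuous_phi k).measurable.comp measurable_fst)).mul
    ((continuous_phi k).measurable.comp measurable_snd.snd)

theorem setIntegral_indicator_Iio {t T : ℝ} (ht : t ∈ Set.Icc 0 T) (f : ℝ → ℝ) :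
    ∫ s in Set.Icc 0 T, (Set.Iio t).indicator f s = ∫ s in (0 : ℝ)..t, f s := by
  have hset : Set.Icc 0 T ∩ Set.Iio t = Set.Ico 0 t := by
    ext s
    simp only [Set.mem_inter_iff, Set.mem_Icc, Set.mem_Iio, Set.mem_Ico]
    exact ⟨fun hs => ⟨hs.1.1, hs.2⟩, fun hs => ⟨⟨hs.1, hs.2.le.trans ht.2⟩, hs.2⟩⟩
  rw [setIntegral_indicator measurableSet_Iio, hset, integral_Ico_eq_integral_Ioc,
    ← intervalIntegral.integral_of_le ht.1]

theorem integral_modeDecay_sq_le {d : ℕ} {t T : ℝ} (ht : t ∈ Set.Icc 0 T) (k : Fin d → ℕ) :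
    ∫ s in Set.Icc 0 T, modeDecay t k s * modeDecay t k s ≤
      (2 * T + 1) * ((1 + ksq k) ^ 2)⁻¹ := by
  set q := ksq k with hq
  have hq0 : 0 ≤ q := ksq_nonneg k
  have hind : ∀ s, modeDecay t k s * modeDecay t k s =
      (Set.Iio t).indicator (fun s => Real.exp (-(2 * q ^ 2) * (t - s))) s := fun s => by
    unfold modeDecay
    by_cases hs : s < t
    · rw [if_pos hs, Set.indicator_of_mem (Set.mem_Iio.2 hs), ← Real.exp_add, hq]
      ring_nf
    · simp [hs]
  simp_rw [hind]
  rw [setIntegral_indicator_Iio ht]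
  set I := ∫ s in (0 : ℝ)..t, Real.exp (-(2 * q ^ 2) * (t - s)) with hI
  have hIT : I ≤ T := by
    have hmono : I ≤ ∫ _s in (0 : ℝ)..t, (1 : ℝ) := by
      refine intervalIntegral.integral_mono_on ht.1
        (Continuous.intervalIntegrable (by fun_prop) _ _) (by simp) fun s hs => ?_
      exact Real.exp_le_one_iff.2 (by nlinarith [sq_nonneg q, hs.2])
    have := ht.2
    simp only [intervalIntegral.integral_const, sub_zero, smul_eq_mul, mul_one] at hmono
    linarith
  have hqI : 2 * q ^ 2 * I ≤ 1 := by
    have hderiv : ∀ s ∈ Set.uIcc 0 t, HasDerivAt (fun s => Real.exp (-(2 * q ^ 2) * (t - s)))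
        (2 * q ^ 2 * Real.exp (-(2 * q ^ 2) * (t - s))) s := fun s _ => by
      have := (((hasDerivAt_id' s).const_sub t).const_mul (-(2 * q ^ 2))).exp
      convert this using 1
      ring
    rw [hI, ← intervalIntegral.integral_const_mul,
      intervalIntegral.integral_eq_sub_of_hasDerivAt hderiv
        (Continuous.intervalIntegrable (by fun_prop) _ _)]
    have := Real.exp_pos (-(2 * q ^ 2) * (t - 0))
    simp only [sub_self, mul_zero, Real.exp_zero]
    linarith
  have hI0 : 0 ≤ I := intervalIntegral.integral_nonneg ht.1 fun s _ => (Real.exp_pos _).le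
  rw [← div_eq_mul_inv, le_div_iff₀ (by positivity)]
  nlinarith [mul_nonneg hI0 (sq_nonneg (1 - q))]

/-- The space-time domain `[0,T] × [0,π]^d` with Lebesgue measure. -/
abbrev spaceTime (d : ℕ) (T : ℝ) : Measure (ℝ × (Fin d → ℝ)) :=
  (volume.restrict (Set.Icc 0 T)).prod (volume.restrict (Dom d))

theorem integral_mode_mul_mode_le {d : ℕ} {t T : ℝ} (ht : t ∈ Set.Icc 0 T) (x : Fin d → ℝ)
    (k l : Fin d → ℕ) :
    ∫ z, (modeDecay t k z.1 * phi k x * phi k z.2) * (modeDecay t l z.1 * phi l x * phi l z.2)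
        ∂spaceTime d T ≤
      if k = l then volume.real (Dom d) * (2 * T + 1) * ((1 + ksq k) ^ 2)⁻¹ else 0 := by
  have hfac : ∀ z : ℝ × (Fin d → ℝ),
      (modeDecay t k z.1 * phi k x * phi k z.2) * (modeDecay t l z.1 * phi l x * phi l z.2) =
        (phi k x * phi l x) * ((modeDecay t k z.1 * modeDecay t l z.1) *
          (phi k z.2 * phi l z.2)) := fun z => by ring
  simp_rw [hfac]
  rw [integral_const_mul, integral_prod_mul (fun s => modeDecay t k s * modeDecay t l s)
    (fun y => phi k y * phi l y)]
  split_ifs with hkl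
  · subst hkl
    have hφ : phi k x * phi k x ≤ 1 := by
      nlinarith [abs_phi_le_one k x, abs_mul_abs_self (phi k x), abs_nonneg (phi k x)]
    have hφ0 := mul_self_nonneg (phi k x)
    have hA := integral_modeDecay_sq_le ht k
    have hA0 : 0 ≤ ∫ s in Set.Icc 0 T, modeDecay t k s * modeDecay t k s :=
      integral_nonneg fun s => mul_self_nonneg _
    have hB := integral_phi_sq_le k
    have hB0 : 0 ≤ ∫ y in Dom d, phi k y * phi k y := integral_nonneg fun s => mul_self_nonneg _
    calc _ ≤ _ := mul_le_of_le_one_left (mul_nonneg hA0 hB0) hφ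
      _ ≤ ((2 * T + 1) * ((1 + ksq k) ^ 2)⁻¹) * volume.real (Dom d) :=
        mul_le_mul hA hB hB0 (hA0.trans hA)
      _ = _ := by ring
  · rw [integral_phi_mul_phi hkl]
    simp

theorem integrable_mode_mul_mode {d : ℕ} (t T : ℝ) (x : Fin d → ℝ) (k l : Fin d → ℕ) :
    Integrable (fun z : ℝ × (Fin d → ℝ) => (modeDecay t k z.1 * phi k x * phi k z.2) *
      (modeDecay t l z.1 * phi l x * phi l z.2)) (spaceTime d T) := by
  have hmeas : ∀ k : Fin d → ℕ,
      Measurable fun z : ℝ × (Fin d → ℝ) => modeDecay t k z.1 * phi k x * phi k z.2 := fun k =>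
    (((measurable_modeDecay t k).comp measurable_fst).mul_const _).mul
      ((continuous_phi k).measurable.comp measurable_snd)
  have hle : ∀ (k : Fin d → ℕ) (z : ℝ × (Fin d → ℝ)),
      ‖modeDecay t k z.1 * phi k x * phi k z.2‖ ≤ 1 := fun k z => by
    rw [norm_mul, norm_mul]
    exact mul_le_one₀ (mul_le_one₀ (abs_modeDecay_le_one t k _) (norm_nonneg _)
      (abs_phi_le_one k x)) (norm_nonneg _) (abs_phi_le_one k _)
  refine Integrable.of_bound ((hmeas k).mul (hmeas l)).aestronglyMeasurable 1
    (Eventually.of_forall fun z => ?_)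
  rw [norm_mul]
  exact mul_le_one₀ (hle k z) (norm_nonneg _) (hle l z)

theorem exists_causalGreen_sq_bound {d : ℕ} (hd : d ≤ 3) {t T : ℝ} (ht : t ∈ Set.Icc 0 T) :
    ∃ C : ℝ, ∀ x : Fin d → ℝ,
      Integrable (fun z => causalGreen t x z.1 z.2 ^ 2) (spaceTime d T) ∧
        ∫ z, causalGreen t x z.1 z.2 ^ 2 ∂spaceTime d T ≤ C := by
  have hT : 0 ≤ T := ht.1.trans ht.2
  have hsum := (summable_inv_one_add_ksq_sq hd).mul_left (volume.real (Dom d) * (2 * T + 1))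
  set c : (Fin d → ℕ) → ℝ := fun k => volume.real (Dom d) * (2 * T + 1) * ((1 + ksq k) ^ 2)⁻¹
    with hc
  have hc0 : ∀ k, 0 ≤ c k := fun k => by positivity
  refine ⟨∑' k, c k, fun x => ?_⟩
  have hC0 : 0 ≤ ∑' k, c k := tsum_nonneg hc0
  have hmeas : Measurable fun z : ℝ × (Fin d → ℝ) => causalGreen t x z.1 z.2 ^ 2 :=
    ((measurable_causalGreen hd t).comp (measurable_const.prodMk measurable_id)).pow_const 2
  set S : Finset (Fin d → ℕ) → ℝ × (Fin d → ℝ) → ℝ := fun F z =>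
    ∑ k ∈ F, ∑ l ∈ F, (modeDecay t k z.1 * phi k x * phi k z.2) *
      (modeDecay t l z.1 * phi l x * phi l z.2) with hS
  have hSsq : ∀ F z, S F z = (∑ k ∈ F, modeDecay t k z.1 * phi k x * phi k z.2) ^ 2 :=
    fun F z => by rw [hS, sq, Finset.sum_mul_sum]
  have hSint : ∀ F, Integrable (S F) (spaceTime d T) := fun F =>
    integrable_finsetSum _ fun k _ => integrable_finsetSum _ fun l _ =>
      integrable_mode_mul_mode t T x k l
  have hSle : ∀ F, ∫ z, S F z ∂spaceTime d T ≤ ∑' k, c k := fun F => by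
    rw [hS, integral_finsetSum _ fun k _ => integrable_finsetSum _ fun l _ =>
      integrable_mode_mul_mode t T x k l]
    calc _ ≤ ∑ k ∈ F, ∑ l ∈ F, if k = l then c k else 0 := by
          refine Finset.sum_le_sum fun k _ => ?_
          rw [integral_finsetSum _ fun l _ => integrable_mode_mul_mode t T x k l]
          exact Finset.sum_le_sum fun l _ => integral_mode_mul_mode_le ht x k l
      _ = ∑ k ∈ F, c k := by
          refine Finset.sum_congr rfl fun k hk => ?_
          simp [hk]
      _ ≤ ∑' k, c k := hsum.sum_le_tsum _ fun k _ => hc0 k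
  have hSmeas : ∀ F, Measurable (S F) := fun F => by
    refine Finset.measurable_fun_sum _ fun k _ => Finset.measurable_fun_sum _ fun l _ => ?_
    exact ((((measurable_modeDecay t k).comp measurable_fst).mul_const _).mul
      ((continuous_phi k).measurable.comp measurable_snd)).mul
      ((((measurable_modeDecay t l).comp measurable_fst).mul_const _).mul
      ((continuous_phi l).measurable.comp measurable_snd))
  have hfatou : ∫⁻ z, ENNReal.ofReal (causalGreen t x z.1 z.2 ^ 2) ∂spaceTime d T ≤
      ENNReal.ofReal (∑' k, c k) := by
    have hlim : ∀ z : ℝ × (Fin d → ℝ), ENNReal.ofReal (causalGreen t x z.1 z.2 ^ 2) =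
        liminf (fun F => ENNReal.ofReal (S F z)) atTop := fun z => by
      refine (Tendsto.liminf_eq (ENNReal.tendsto_ofReal ?_)).symm
      simp_rw [hSsq]
      exact Tendsto.pow (hasSum_causalGreen hd t z.1 x z.2) 2
    simp_rw [hlim]
    refine (lintegral_liminf_le fun F => (hSmeas F).ennreal_ofReal).trans ?_
    refine liminf_le_of_le (by isBoundedDefault) fun b hb => ?_
    obtain ⟨F, hF⟩ := hb.exists
    refine hF.trans ?_
    rw [← ofReal_integral_eq_lintegral_ofReal (hSint F)
      (Eventually.of_forall fun z => by rw [hSsq]; exact sq_nonneg _)]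
    exact ENNReal.ofReal_le_ofReal (hSle F)
  have hnn : 0 ≤ᵐ[spaceTime d T] fun z => causalGreen t x z.1 z.2 ^ 2 :=
    Eventually.of_forall fun z => sq_nonneg _
  refine ⟨⟨hmeas.aestronglyMeasurable, ?_⟩, ?_⟩
  · rw [hasFiniteIntegral_iff_ofReal hnn]
    exact hfatou.trans_lt ENNReal.ofReal_lt_top
  · rw [integral_eq_lintegral_of_nonneg_ae hnn hmeas.aestronglyMeasurable]
    exact ENNReal.toReal_le_of_le_ofReal hC0 hfatou

theorem spaceTime_eq_restrict (d : ℕ) (T : ℝ) :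
    spaceTime d T = volume.restrict (Set.Icc 0 T ×ˢ Dom d) := by
  rw [spaceTime, Measure.prod_restrict, ← Measure.volume_eq_prod]

theorem MemL2TD.memLp {d : ℕ} {T : ℝ} {v : ℝ → (Fin d → ℝ) → ℝ} (hv : MemL2TD T v) :
    MemLp (fun z : ℝ × (Fin d → ℝ) => v z.1 z.2) 2 (spaceTime d T) := by
  refine (memLp_two_iff_integrable_sq hv.1.aestronglyMeasurable).2 ?_
  rw [spaceTime_eq_restrict]
  exact hv.2

theorem intervalIntegral_green_eq {d : ℕ} {t T : ℝ} (ht : t ∈ Set.Icc 0 T) (x : Fin d → ℝ)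
    (h w : ℝ → (Fin d → ℝ) → ℝ) :
    ∫ s in (0 : ℝ)..t, ∫ y in Dom d, green (t - s) x y * h s y * w s y =
      ∫ s in Set.Icc 0 T, ∫ y in Dom d, w s y * (causalGreen t x s y * h s y) := by
  have hind : ∀ s, ∫ y in Dom d, w s y * (causalGreen t x s y * h s y) =
      (Set.Iio t).indicator (fun s => ∫ y in Dom d, green (t - s) x y * h s y * w s y) s :=
    fun s => by
      by_cases hs : s < t
      · rw [Set.indicator_of_mem (Set.mem_Iio.2 hs)]
        simp_rw [causalGreen, if_pos hs, mul_comm (w s _)]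
      · simp [causalGreen, hs]
  simp_rw [hind]
  rw [setIntegral_indicator_Iio ht]

theorem tendsto_LpNorm_zero {d : ℕ} {p : ℝ} (hp : 1 ≤ p) {u : ℕ → (Fin d → ℝ) → ℝ} {M : ℝ}
    (hmeas : ∀ n, Measurable (u n)) (hbdd : ∀ n x, |u n x| ≤ M)
    (hlim : ∀ x, Tendsto (fun n => u n x) atTop (nhds 0)) :
    Tendsto (fun n => LpNorm p (u n)) atTop (nhds 0) := by
  have hp0 : 0 < p := by linarith
  have hint : Tendsto (fun n => ∫ x in Dom d, |u n x| ^ p) atTop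
      (nhds (∫ _x in Dom d, (0 : ℝ))) := by
    refine tendsto_integral_of_dominated_convergence (fun _ => M ^ p)
      (fun n => ((hmeas n).abs.pow_const p).aestronglyMeasurable) (integrable_const _)
      (fun n => Eventually.of_forall fun x => ?_) (Eventually.of_forall fun x => ?_)
    · rw [Real.norm_of_nonneg (by positivity)]
      exact Real.rpow_le_rpow (abs_nonneg _) (hbdd n x) hp0.le
    · have := ((hlim x).abs).rpow_const (p := p) (Or.inr hp0.le)
      simpa [Real.zero_rpow hp0.ne'] using this
  have := hint.rpow_const (p := 1 / p) (Or.inr (by positivity))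
  simpa [LpNorm, Real.zero_rpow (inv_pos.2 hp0).ne'] using this

/-- Convergence (4.8): if `vₙ ∈ H_N` converges weakly in `L²([0,T]×D)` to `v`, then for every
`t ∈ [0,T]` the `L^p(D)`-norm of `x ↦ ∫_0^t ∫_D G_{t-s}(x,y) h(s,y)(vₙ(s,y)-v(s,y)) dy ds`
tends to `0`. -/
theorem weak_convergence_stochastic_convolution (d : ℕ) (hd : d ∈ ({1, 2, 3} : Set ℕ))
    (T : ℝ) (hT : 0 < T) (h : ℝ → (Fin d → ℝ) → ℝ)
    (hhmeas : Measurable (Function.uncurry h)) (hhbdd : ∃ Ch : ℝ, ∀ s x, |h s x| ≤ Ch)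
    (p : ℝ) (hp : 1 ≤ p) (N : ℕ)
    (vseq : ℕ → ℝ → (Fin d → ℝ) → ℝ) (v : ℝ → (Fin d → ℝ) → ℝ)
    (hvseq : ∀ n, MemHN T N (vseq n)) (hv : MemL2TD T v)
    (hweak : ∀ φ : ℝ → (Fin d → ℝ) → ℝ, MemL2TD T φ →
      Filter.Tendsto
        (fun n => ∫ t in Set.Icc (0 : ℝ) T, ∫ x in Dom d, vseq n t x * φ t x)
        Filter.atTop (nhds (∫ t in Set.Icc (0 : ℝ) T, ∫ x in Dom d, v t x * φ t x))) :
    ∀ t ∈ Set.Icc (0 : ℝ) T,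
      Filter.Tendsto
        (fun n => LpNorm p (fun x =>
          ∫ s in (0 : ℝ)..t, ∫ y in Dom d, green (t - s) x y * h s y * (vseq n s y - v s y)))
        Filter.atTop (nhds 0) := by
  
  intro t ht
  have hd3 : d ≤ 3 := by
    rcases hd with rfl | rfl | rfl <;> norm_num
  obtain ⟨Ch, hCh⟩ := hhbdd
  obtain ⟨C, hC⟩ := exists_causalGreen_sq_bound hd3 ht
  let Φ : (Fin d → ℝ) → ℝ → (Fin d → ℝ) → ℝ := fun x s y => causalGreen t x s y * h s y
  have hΦjoint : Measurable fun z : (Fin d → ℝ) × ℝ × (Fin d → ℝ) => Φ z.1 z.2.1 z.2.2 :=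
    (measurable_causalGreen hd3 t).mul (hhmeas.comp measurable_snd)
  have hΦmeas : ∀ x, Measurable (Function.uncurry (Φ x)) := fun x =>
    hΦjoint.comp (measurable_const.prodMk measurable_id)
  have hΦle : ∀ x (z : ℝ × (Fin d → ℝ)),
      Φ x z.1 z.2 ^ 2 ≤ causalGreen t x z.1 z.2 ^ 2 * Ch ^ 2 := fun x z => by
    rw [mul_pow]
    exact mul_le_mul_of_nonneg_left (sq_le_sq' (abs_le.1 (hCh _ _)).1 (abs_le.1 (hCh _ _)).2)
      (sq_nonneg _)
  have hΦsq : ∀ x, Integrable (fun z : ℝ × (Fin d → ℝ) => Φ x z.1 z.2 ^ 2) (spaceTime d T) :=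
    fun x => ((hC x).1.mul_const (Ch ^ 2)).mono'
      ((hΦmeas x).pow_const 2).aestronglyMeasurable
      (Eventually.of_forall fun z => by
        rw [Real.norm_of_nonneg (sq_nonneg _)]
        exact hΦle x z)
  have hΦint : ∀ x, ∫ z, Φ x z.1 z.2 ^ 2 ∂spaceTime d T ≤ C * Ch ^ 2 := fun x => by
    refine (integral_mono (hΦsq x) ((hC x).1.mul_const (Ch ^ 2)) (hΦle x)).trans ?_
    rw [integral_mul_const]
    exact mul_le_mul_of_nonneg_right (hC x).2 (sq_nonneg _)
  have hΦL2 : ∀ x, MemL2TD T (Φ x) := fun x => by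
    refine ⟨hΦmeas x, ?_⟩
    rw [IntegrableOn, ← spaceTime_eq_restrict]
    exact hΦsq x
  have hpair : ∀ {w : ℝ → (Fin d → ℝ) → ℝ}, MemL2TD T w → ∀ x,
      Integrable (fun z : ℝ × (Fin d → ℝ) => w z.1 z.2 * Φ x z.1 z.2) (spaceTime d T) :=
    fun hw x => hw.memLp.integrable_mul (hΦL2 x).memLp
  have hdiff : ∀ n x, Integrable
      (fun z : ℝ × (Fin d → ℝ) => (vseq n z.1 z.2 - v z.1 z.2) * Φ x z.1 z.2) (spaceTime d T) :=
    fun n x => by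
      simp_rw [sub_mul]
      exact (hpair (hvseq n).1 x).sub (hpair hv x)
  have hconv : ∀ n x,
      ∫ s in (0 : ℝ)..t, ∫ y in Dom d, green (t - s) x y * h s y * (vseq n s y - v s y) =
        ∫ z, (vseq n z.1 z.2 - v z.1 z.2) * Φ x z.1 z.2 ∂spaceTime d T := fun n x => by
    rw [intervalIntegral_green_eq ht x h (fun s y => vseq n s y - v s y),
      integral_prod _ (hdiff n x)]
  simp_rw [hconv]
  refine tendsto_LpNorm_zero hp
    (M := N + ∫ z, v z.1 z.2 ^ 2 ∂spaceTime d T + C * Ch ^ 2 / 2) (fun n => ?_) (fun n x => ?_)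
    fun x => ?_
  · refine (StronglyMeasurable.integral_prod_right (ν := spaceTime d T)
      (f := fun x z => (vseq n z.1 z.2 - v z.1 z.2) * Φ x z.1 z.2) ?_).measurable
    refine Measurable.stronglyMeasurable ?_
    exact (((hvseq n).1.1.comp measurable_snd).sub (hv.1.comp measurable_snd)).mul hΦjoint
  · have hvn : Integrable (fun z : ℝ × (Fin d → ℝ) => vseq n z.1 z.2 ^ 2) (spaceTime d T) :=
      (hvseq n).1.memLp.integrable_sq
    have hv2 : Integrable (fun z : ℝ × (Fin d → ℝ) => v z.1 z.2 ^ 2) (spaceTime d T) :=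
      hv.memLp.integrable_sq
    have hN : ∫ z, vseq n z.1 z.2 ^ 2 ∂spaceTime d T ≤ N := by
      rw [integral_prod _ hvn]
      exact (hvseq n).2
    have hbound : |∫ z, (vseq n z.1 z.2 - v z.1 z.2) * Φ x z.1 z.2 ∂spaceTime d T| ≤
        ∫ z, (vseq n z.1 z.2 ^ 2 + v z.1 z.2 ^ 2 + Φ x z.1 z.2 ^ 2 / 2) ∂spaceTime d T := by
      rw [← Real.norm_eq_abs]
      refine norm_integral_le_of_norm_le ((hvn.add hv2).add ((hΦsq x).div_const 2))
        (Eventually.of_forall fun z => ?_)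
      rw [Real.norm_eq_abs, abs_le]
      constructor <;>
      nlinarith [sq_nonneg (vseq n z.1 z.2 + v z.1 z.2),
        sq_nonneg (vseq n z.1 z.2 - v z.1 z.2 + Φ x z.1 z.2),
        sq_nonneg (vseq n z.1 z.2 - v z.1 z.2 - Φ x z.1 z.2)]
    refine hbound.trans ?_
    have hsplit : ∫ z, (vseq n z.1 z.2 ^ 2 + v z.1 z.2 ^ 2 + Φ x z.1 z.2 ^ 2 / 2) ∂spaceTime d T =
        ∫ z, vseq n z.1 z.2 ^ 2 ∂spaceTime d T + ∫ z, v z.1 z.2 ^ 2 ∂spaceTime d T +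
          (∫ z, Φ x z.1 z.2 ^ 2 ∂spaceTime d T) / 2 := by
      rw [← integral_div, ← integral_add hvn hv2]
      exact integral_add (hvn.add hv2) ((hΦsq x).div_const 2)
    have := hΦint x
    linarith
  · have hw := (hweak (Φ x) (hΦL2 x)).sub_const
      (∫ s in Set.Icc (0 : ℝ) T, ∫ y in Dom d, v s y * Φ x s y)
    rw [sub_self] at hw
    refine hw.congr fun n => ?_
    simp_rw [sub_mul]
    rw [integral_sub (hpair (hvseq n).1 x) (hpair hv x), integral_prod _ (hpair (hvseq n).1 x),
      integral_prod _ (hpair hv x)]
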